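/- arXiv:0910.1737 — 2 statements merged into one kernel-verified Lean document; each statement's English description precedes it below -/
import Mathlib

section
/- Let U be a vector of linear functionals. Then U is quasi-definite if and only if there exist a sequence of N×N matrix polynomials G_m(z) = Σ_{j=0}^m β_j^m z^j with each β_m^m a nonsingular upper triangular matrix, and a sequence {Θ_m}_{m∈ℕ} of nonsingular lower triangular matrices, such that (G_m(h(x))ᵀU)(P_j) = Θ_m·δ_{j,m} for all 0 ≤ j ≤ m and all m ∈ ℕ. Moreover, in that case the coefficients of G_m are determined by the block linear system D_m·(β_0^m; β_1^m; …; β_m^m) = (0; …; 0; Θ_m), i.e. the stacked (m+1)N × N block column of coefficients equals D_m^{−1} times the block column whose only nonzero block is Θ_m in the last position. -/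
open Polynomial Matrix Finset

noncomputable section

abbrev Mat (N : ℕ) := Matrix (Fin N) (Fin N) ℝ

/-- A vector of linear functionals `U = (u^1, …, u^N)ᵀ`. -/
abbrev VecFun (N : ℕ) := Fin N → (Polynomial ℝ →ₗ[ℝ] ℝ)

/-- The matrix `(qU)(P)`: its `(i,j)` entry is `u^j (q * P i)`. -/
def matUq {N : ℕ} (U : VecFun N) (q : Polynomial ℝ) (P : Fin N → Polynomial ℝ) : Mat N :=
  Matrix.of fun i j => U j (q * P i)

/-- The matrix `U(P)`: its `(i,j)` entry is `u^j (P i)`. -/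
def matVF {N : ℕ} (U : VecFun N) (P : Fin N → Polynomial ℝ) : Mat N :=
  Matrix.of fun i j => U j (P i)

/-- `P_0(x) = (1, x, …, x^{N-1})ᵀ`. -/
def P0v (N : ℕ) : Fin N → Polynomial ℝ := fun i => X ^ (i : ℕ)

/-- `P_j(x) = h(x)^j • P_0(x)`. -/
def Pvec (N : ℕ) (h : Polynomial ℝ) (j : ℕ) : Fin N → Polynomial ℝ := fun i => h ^ j * X ^ (i : ℕ)

/-- The `n`-th moment `𝒰_n = U(P_n)`. -/
def Umom (N : ℕ) (U : VecFun N) (h : Polynomial ℝ) (n : ℕ) : Mat N := matUq U (h ^ n) (P0v N)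

def UpperTri {N : ℕ} {R : Type*} [Zero R] (A : Matrix (Fin N) (Fin N) R) : Prop :=
  ∀ i j : Fin N, (j : ℕ) < (i : ℕ) → A i j = 0

def LowerTri {N : ℕ} {R : Type*} [Zero R] (A : Matrix (Fin N) (Fin N) R) : Prop :=
  ∀ i j : Fin N, (i : ℕ) < (j : ℕ) → A i j = 0

/-- Quasi-definiteness: every leading principal submatrix (of any size `n`) of the block
Hankel moment matrices `D_m = (𝒰_{i+j})` is nonsingular.  The `n × n` leading principal
submatrix has `(a,b)` entry `u^{b % N} (h^{a/N + b/N} * x^{a % N})`. -/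
def QuasiDef (N : ℕ) (hN : 0 < N) (U : VecFun N) (h : Polynomial ℝ) : Prop :=
  ∀ n : ℕ, IsUnit (Matrix.det (Matrix.of fun a b : Fin n =>
    U ⟨(b : ℕ) % N, Nat.mod_lt _ hN⟩ (h ^ ((a : ℕ) / N + (b : ℕ) / N) * X ^ ((a : ℕ) % N))))

/-!
Since `(h^k U)(P_j) = 𝒰_{j+k}`, orthogonality is itself the block Hankel system: the infinite block
matrix `(𝒰_{j+k})`, multiplied on the right by the block upper triangular matrix of coefficients
`β`, is block lower triangular with diagonal blocks `Θ_m`. As the diagonal blocks of `β` are upper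
triangular and the `Θ_m` are lower triangular, this is a scalar identity `M B = L` with `B` upper
and `L` lower triangular, both with invertible diagonals. Such a `B` exists if and only if all
leading principal minors of `M` are invertible: truncating to the first `n` indices commutes with
multiplication by an upper triangular matrix, which gives one direction, and for the other the
`n`-th column of `B` is the last column of the inverse of the leading submatrix of size `n + 1`,
whose last entry is by Cramer's rule a ratio of consecutive minors.
-/

section LeadingSubmatrix

variable {α : Type*}

/-- The `n × n` leading principal submatrix of an infinite matrix. -/
def leadingSubmatrix (M : Matrix ℕ ℕ α) (n : ℕ) : Matrix (Fin n) (Fin n) α :=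
  M.submatrix (↑) (↑)

/-- The product of an infinite matrix `M` with an upper triangular infinite matrix `B`. The sums are
truncated at the diagonal of `B`, so entries of `B` below the diagonal are never read. -/
def mulUpper [NonUnitalNonAssocSemiring α] (M B : Matrix ℕ ℕ α) : Matrix ℕ ℕ α :=
  of fun a n => ∑ b ∈ range (n + 1), M a b * B b n

variable [NonUnitalNonAssocSemiring α] {M B : Matrix ℕ ℕ α}

lemma mulUpper_congr {B' : Matrix ℕ ℕ α} (hBB' : ∀ n, ∀ b ≤ n, B b n = B' b n) :
    mulUpper M B = mulUpper M B' := by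
  ext a n
  exact sum_congr rfl fun b hb => congrArg (M a b * ·) (hBB' n b (mem_range_succ_iff.1 hb))

lemma mulUpper_apply_eq_sum_range (hB : B.IsUpperTriangular) {n K : ℕ} (hK : n < K) (a : ℕ) :
    mulUpper M B a n = ∑ b ∈ range K, M a b * B b n := by
  refine sum_subset (range_subset_range.2 hK) fun b _ hb => ?_
  rw [hB (show n < b by simpa using hb), mul_zero]

lemma leadingSubmatrix_mulUpper (hB : B.IsUpperTriangular) (n : ℕ) :
    leadingSubmatrix (mulUpper M B) n = leadingSubmatrix M n * leadingSubmatrix B n := by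
  ext a c
  exact (mulUpper_apply_eq_sum_range hB c.2 a).trans (Finset.sum_range _)

end LeadingSubmatrix

section Triangularization

variable {R : Type*} [CommRing R]

lemma isUnit_det_iff_of_isUpperTriangular {ι : Type*} [Fintype ι] [LinearOrder ι]
    {A : Matrix ι ι R} (hA : A.IsUpperTriangular) : IsUnit A.det ↔ ∀ i, IsUnit (A i i) := by
  simp [det_of_isUpperTriangular hA, IsUnit.prod_iff]

lemma isUnit_det_iff_of_isLowerTriangular {ι : Type*} [Fintype ι] [LinearOrder ι]
    {A : Matrix ι ι R} (hA : A.IsLowerTriangular) : IsUnit A.det ↔ ∀ i, IsUnit (A i i) := by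
  simp [det_of_isLowerTriangular A hA, IsUnit.prod_iff]

lemma inv_apply_last_last {n : ℕ} (A : Matrix (Fin (n + 1)) (Fin (n + 1)) R) :
    A⁻¹ (Fin.last n) (Fin.last n) =
      Ring.inverse A.det * (A.submatrix Fin.castSucc Fin.castSucc).det := by
  rw [Matrix.inv_def, Matrix.smul_apply, adjugate_fin_succ_eq_det_submatrix, Fin.succAbove_last,
    Even.neg_one_pow ⟨_, rfl⟩, one_mul, smul_eq_mul]

/-- The infinite upper triangular matrix whose `n`-th column is the last column of the inverse of
the leading principal submatrix of `M` of size `n + 1`, extended by zero. -/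
def lastInverseColumns (M : Matrix ℕ ℕ R) : Matrix ℕ ℕ R :=
  of fun b n => if hb : b < n + 1 then (leadingSubmatrix M (n + 1))⁻¹ ⟨b, hb⟩ (Fin.last n) else 0

variable {M : Matrix ℕ ℕ R}

lemma isUpperTriangular_lastInverseColumns : (lastInverseColumns M).IsUpperTriangular :=
  fun _ _ hnb => dif_neg (Nat.not_lt.2 (Nat.succ_le_of_lt hnb))

lemma mulUpper_lastInverseColumns_apply {a n : ℕ}
    (hM : IsUnit (leadingSubmatrix M (n + 1)).det) (han : a ≤ n) :
    mulUpper M (lastInverseColumns M) a n = if a = n then 1 else 0 := by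
  set A := leadingSubmatrix M (n + 1)
  have hentry : mulUpper M (lastInverseColumns M) a n =
      (A * A⁻¹) ⟨a, Nat.lt_succ_of_le han⟩ (Fin.last n) := by
    rw [mul_apply]
    refine (Finset.sum_range _).trans (sum_congr rfl fun b _ => ?_)
    exact congrArg (M a b * ·) (dif_pos b.2)
  rw [hentry, mul_nonsing_inv _ hM, one_apply]
  simp only [Fin.ext_iff, Fin.val_last]

lemma isUnit_lastInverseColumns_diag {n : ℕ} (hn : IsUnit (leadingSubmatrix M n).det)
    (hn_succ : IsUnit (leadingSubmatrix M (n + 1)).det) :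
    IsUnit (lastInverseColumns M n n) := by
  have hdiag : lastInverseColumns M n n =
      Ring.inverse (leadingSubmatrix M (n + 1)).det * (leadingSubmatrix M n).det :=
    (dif_pos n.lt_succ_self).trans (inv_apply_last_last _)
  rw [hdiag]
  exact hn_succ.ringInverse.mul hn

theorem forall_isUnit_det_leadingSubmatrix_iff :
    (∀ n, IsUnit (leadingSubmatrix M n).det) ↔
      ∃ B : Matrix ℕ ℕ R, (B.IsUpperTriangular ∧ ∀ n, IsUnit (B n n)) ∧
        (mulUpper M B).IsLowerTriangular ∧ ∀ n, IsUnit (mulUpper M B n n) := by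
  constructor
  · intro hM
    refine ⟨lastInverseColumns M,
      ⟨isUpperTriangular_lastInverseColumns,
        fun n => isUnit_lastInverseColumns_diag (hM n) (hM (n + 1))⟩,
      fun a n han => ?_, fun n => ?_⟩
    · replace han : a < n := han
      rw [mulUpper_lastInverseColumns_apply (hM (n + 1)) han.le, if_neg han.ne]
    · simp [mulUpper_lastInverseColumns_apply (hM (n + 1)) le_rfl]
  · rintro ⟨B, ⟨hB, -⟩, hlower, hdiag⟩ n
    have hlead : (leadingSubmatrix (mulUpper M B) n).IsLowerTriangular := fun _ _ hac => hlower hac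
    have hdet := (isUnit_det_iff_of_isLowerTriangular hlead).2 fun i => hdiag i
    rw [leadingSubmatrix_mulUpper hB, det_mul] at hdet
    exact isUnit_of_mul_isUnit_left hdet

end Triangularization

section Blocks

variable {N : ℕ} [NeZero N] {α : Type*}

lemma strictMono_toLex_divModEquiv : StrictMono fun a => toLex (Nat.divModEquiv N a) := by
  intro a b hab
  rw [Prod.Lex.toLex_lt_toLex]
  rcases (Nat.div_le_div_right hab.le : a / N ≤ b / N).lt_or_eq with hlt | heq
  · exact Or.inl hlt
  · refine Or.inr ⟨heq, show a % N < b % N from ?_⟩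
    have ha := Nat.div_add_mod a N
    have hb := Nat.div_add_mod b N
    rw [heq] at ha
    omega

/-- An infinite matrix of `N × N` blocks read as an infinite matrix of scalars, the index `a`
standing for position `a % N` in block `a / N`. -/
def flattenBlocks : Matrix ℕ ℕ (Matrix (Fin N) (Fin N) α) ≃ Matrix ℕ ℕ α :=
  (comp ℕ ℕ (Fin N) (Fin N) α).trans
    (reindex (Nat.divModEquiv N).symm (Nat.divModEquiv N).symm)

variable {A B : Matrix ℕ ℕ (Matrix (Fin N) (Fin N) α)}

lemma flattenBlocks_apply_symm (p q : ℕ × Fin N) :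
    flattenBlocks A ((Nat.divModEquiv N).symm p) ((Nat.divModEquiv N).symm q) =
      A p.1 q.1 p.2 q.2 := by
  simp only [flattenBlocks, Equiv.trans_apply, reindex_apply, Equiv.symm_symm, submatrix_apply,
    Equiv.apply_symm_apply, comp_apply]

lemma forall_flattenBlocks_diag_iff {p : α → Prop} :
    (∀ n, p (flattenBlocks A n n)) ↔ ∀ m i, p (A m m i i) :=
  (Nat.divModEquiv N).symm.forall_congr_right.symm.trans <| by
    simp only [flattenBlocks_apply_symm, Prod.forall]

lemma divModEquiv_symm_lt_iff {p q : ℕ × Fin N} :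
    (Nat.divModEquiv N).symm p < (Nat.divModEquiv N).symm q ↔
      p.1 < q.1 ∨ p.1 = q.1 ∧ p.2 < q.2 := by
  rw [← strictMono_toLex_divModEquiv (N := N).lt_iff_lt]
  simp only [Equiv.apply_symm_apply, Prod.Lex.toLex_lt_toLex]

lemma isUpperTriangular_flattenBlocks_iff [Zero α] :
    (flattenBlocks A).IsUpperTriangular ↔
      A.IsUpperTriangular ∧ ∀ m, (A m m).IsUpperTriangular := by
  constructor
  · intro hA
    have hblocks (p q : ℕ × Fin N) (hqp : q.1 < p.1 ∨ q.1 = p.1 ∧ q.2 < p.2) :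
        A p.1 q.1 p.2 q.2 = 0 :=
      (flattenBlocks_apply_symm p q).symm.trans (hA (divModEquiv_symm_lt_iff.2 hqp))
    exact ⟨fun j m hmj => Matrix.ext fun i c => hblocks (j, i) (m, c) (Or.inl hmj),
      fun m i c hci => hblocks (m, i) (m, c) (Or.inr ⟨rfl, hci⟩)⟩
  · rintro ⟨hA, hdiag⟩ a b hba
    obtain ⟨⟨j, i⟩, rfl⟩ := (Nat.divModEquiv N).symm.surjective a
    obtain ⟨⟨m, c⟩, rfl⟩ := (Nat.divModEquiv N).symm.surjective b
    rw [flattenBlocks_apply_symm]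
    rcases divModEquiv_symm_lt_iff.1 hba with hmj | ⟨rfl, hci⟩
    · exact congrFun₂ (hA hmj) i c
    · exact hdiag _ hci

lemma isUpperTriangular_transpose_iff {ι : Type*} [LT ι] [Zero α] {M : Matrix ι ι α} :
    Mᵀ.IsUpperTriangular ↔ M.IsLowerTriangular :=
  forall_comm

lemma isLowerTriangular_flattenBlocks_iff [Zero α] :
    (flattenBlocks A).IsLowerTriangular ↔
      A.IsLowerTriangular ∧ ∀ m, (A m m).IsLowerTriangular := by
  have htranspose : (flattenBlocks A)ᵀ = flattenBlocks (Aᵀ.map transpose) := rfl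
  have hblocks : (Aᵀ.map transpose).IsUpperTriangular ↔ A.IsLowerTriangular :=
    ⟨fun hA j m hjm => transpose_eq_zero.1 (hA hjm), fun hA j m hjm => transpose_eq_zero.2 (hA hjm)⟩
  rw [← isUpperTriangular_transpose_iff, htranspose, isUpperTriangular_flattenBlocks_iff, hblocks]
  exact and_congr_right fun _ => forall_congr' fun m => isUpperTriangular_transpose_iff

lemma flattenBlocks_mulUpper [NonUnitalNonAssocSemiring α]
    (hB : (flattenBlocks B).IsUpperTriangular) :
    flattenBlocks (mulUpper A B) = mulUpper (flattenBlocks A) (flattenBlocks B) := by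
  ext a n
  have hn : n < (n / N + 1) * N := Nat.lt_mul_of_div_lt (Nat.lt_succ_self _) N.pos_of_neZero
  rw [mulUpper_apply_eq_sum_range hB hn]
  calc flattenBlocks (mulUpper A B) a n
      = ∑ k ∈ range (n / N + 1), ∑ l : Fin N,
          A (a / N) k (Fin.ofNat N a) l * B k (n / N) l (Fin.ofNat N n) :=
        Matrix.sum_apply _ _ (range (n / N + 1)) fun k => A (a / N) k * B k (n / N)
    _ = ∑ p ∈ range (n / N + 1) ×ˢ univ,
          A (a / N) p.1 (Fin.ofNat N a) p.2 * B p.1 (n / N) p.2 (Fin.ofNat N n) :=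
        (sum_product (range (n / N + 1)) univ fun p : ℕ × Fin N =>
          A (a / N) p.1 (Fin.ofNat N a) p.2 * B p.1 (n / N) p.2 (Fin.ofNat N n)).symm
    _ = ∑ b ∈ range ((n / N + 1) * N), flattenBlocks A a b * flattenBlocks B b n := by
        refine (sum_equiv (Nat.divModEquiv N) (fun b => ?_) fun b _ => rfl).symm
        simp [Nat.div_lt_iff_lt_mul (NeZero.pos N)]

section CommRing

variable {R : Type*} [CommRing R] {A : Matrix ℕ ℕ (Matrix (Fin N) (Fin N) R)}

lemma isUpperTriangular_flattenBlocks_and_isUnit_diag_iff :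
    ((flattenBlocks A).IsUpperTriangular ∧ ∀ n, IsUnit (flattenBlocks A n n)) ↔
      A.IsUpperTriangular ∧ ∀ m, (A m m).IsUpperTriangular ∧ IsUnit (A m m).det := by
  rw [isUpperTriangular_flattenBlocks_iff, forall_flattenBlocks_diag_iff, and_assoc, ← forall_and]
  exact and_congr_right fun _ => forall_congr' fun m => and_congr_right fun hm =>
    (isUnit_det_iff_of_isUpperTriangular hm).symm

lemma isLowerTriangular_flattenBlocks_and_isUnit_diag_iff :
    ((flattenBlocks A).IsLowerTriangular ∧ ∀ n, IsUnit (flattenBlocks A n n)) ↔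
      A.IsLowerTriangular ∧ ∀ m, (A m m).IsLowerTriangular ∧ IsUnit (A m m).det := by
  rw [isLowerTriangular_flattenBlocks_iff, forall_flattenBlocks_diag_iff, and_assoc, ← forall_and]
  exact and_congr_right fun _ => forall_congr' fun m => and_congr_right fun hm =>
    (isUnit_det_iff_of_isLowerTriangular hm).symm

theorem forall_isUnit_det_leadingSubmatrix_flattenBlocks_iff :
    (∀ n, IsUnit (leadingSubmatrix (flattenBlocks A) n).det) ↔
      ∃ B : Matrix ℕ ℕ (Matrix (Fin N) (Fin N) R),
        (B.IsUpperTriangular ∧ ∀ m, (B m m).IsUpperTriangular ∧ IsUnit (B m m).det) ∧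
        (mulUpper A B).IsLowerTriangular ∧
        ∀ m, (mulUpper A B m m).IsLowerTriangular ∧ IsUnit (mulUpper A B m m).det := by
  rw [forall_isUnit_det_leadingSubmatrix_iff, (flattenBlocks (N := N)).surjective.exists]
  refine exists_congr fun B => (and_congr_right fun hB => ?_).trans
    (and_congr_left' isUpperTriangular_flattenBlocks_and_isUnit_diag_iff)
  rw [← flattenBlocks_mulUpper hB.1, isLowerTriangular_flattenBlocks_and_isUnit_diag_iff]

theorem forall_isUnit_det_leadingSubmatrix_flattenBlocks_iff_exists_coeff :
    (∀ n, IsUnit (leadingSubmatrix (flattenBlocks A) n).det) ↔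
      ∃ (β : ℕ → ℕ → Matrix (Fin N) (Fin N) R) (Θ : ℕ → Matrix (Fin N) (Fin N) R),
        (∀ m, (β m m).IsUpperTriangular ∧ IsUnit (β m m).det) ∧
        (∀ m, (Θ m).IsLowerTriangular ∧ IsUnit (Θ m).det) ∧
        ∀ m j, j ≤ m →
          ∑ k ∈ range (m + 1), A j k * β m k = if j = m then Θ m else 0 := by
  rw [forall_isUnit_det_leadingSubmatrix_flattenBlocks_iff]
  constructor
  · rintro ⟨B, ⟨-, hB⟩, hlower, hdiag⟩
    refine ⟨fun m k => B k m, fun m => mulUpper A B m m, hB, hdiag, fun m j hjm => ?_⟩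
    obtain hlt | rfl := hjm.lt_or_eq
    · exact (hlower hlt).trans (if_neg hlt.ne).symm
    · exact (if_pos rfl).symm
  · rintro ⟨β, Θ, hβ, hΘ, horth⟩
    set B : Matrix ℕ ℕ (Matrix (Fin N) (Fin N) R) := of fun k m => if k ≤ m then β m k else 0
    have hmul : mulUpper A B = mulUpper A (of fun k m => β m k) :=
      mulUpper_congr fun m k hkm => if_pos hkm
    have hBdiag (m : ℕ) : B m m = β m m := if_pos le_rfl
    have hdiag (m : ℕ) : mulUpper A B m m = Θ m := by
      rw [hmul]
      exact (horth m m le_rfl).trans (if_pos rfl)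
    refine ⟨B, ⟨fun k m hmk => if_neg (Nat.not_le.2 hmk), fun m => hBdiag m ▸ hβ m⟩,
      fun j m hjm => ?_, fun m => hdiag m ▸ hΘ m⟩
    rw [hmul]
    replace hjm : j < m := hjm
    exact (horth m j hjm.le).trans (if_neg hjm.ne)

end CommRing

end Blocks

section Moments

variable {N : ℕ} (U : VecFun N) (h : Polynomial ℝ)

/-- The block Hankel moment matrix `(𝒰_{j+k})`, of which every `D_m` is a corner. -/
def momentMatrix : Matrix ℕ ℕ (Mat N) :=
  of fun j k => Umom N U h (j + k)

lemma quasiDef_iff_forall_isUnit_det_leadingSubmatrix [NeZero N] :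
    QuasiDef N N.pos_of_neZero U h ↔
      ∀ n, IsUnit (leadingSubmatrix (flattenBlocks (momentMatrix U h)) n).det :=
  Iff.rfl

lemma matUq_pow_Pvec (j k : ℕ) : matUq U (h ^ k) (Pvec N h j) = momentMatrix U h j k := by
  ext i l
  simp only [momentMatrix, Umom, matUq, Pvec, P0v, of_apply]
  rw [← mul_assoc, ← pow_add, add_comm k j]

end Moments

theorem statement3_general (N : ℕ) (hN : 0 < N) (h : Polynomial ℝ) (U : VecFun N) :
    (QuasiDef N hN U h ↔
      ∃ (β : ℕ → ℕ → Mat N) (Θ : ℕ → Mat N),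
        (∀ m, UpperTri (β m m) ∧ IsUnit (β m m).det) ∧
        (∀ m, LowerTri (Θ m) ∧ IsUnit (Θ m).det) ∧
        (∀ m j, j ≤ m →
          (∑ k ∈ Finset.range (m + 1), matUq U (h ^ k) (Pvec N h j) * β m k)
            = if j = m then Θ m else 0)) ∧
    (∀ (β : ℕ → ℕ → Mat N) (Θ : ℕ → Mat N),
      (∀ m j, j ≤ m →
        (∑ k ∈ Finset.range (m + 1), matUq U (h ^ k) (Pvec N h j) * β m k)
          = if j = m then Θ m else 0) →
      ∀ m j, j ≤ m →
        (∑ k ∈ Finset.range (m + 1), Umom N U h (j + k) * β m k)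
          = if j = m then Θ m else 0) := by
  have : NeZero N := .of_pos hN
  simp only [matUq_pow_Pvec]
  exact ⟨(quasiDef_iff_forall_isUnit_det_leadingSubmatrix U h).trans
      forall_isUnit_det_leadingSubmatrix_flattenBlocks_iff_exists_coeff,
    fun _ _ horth => horth⟩

theorem statement3
    (N : ℕ) (hN : 0 < N) (h : Polynomial ℝ) (hh : h.natDegree = N) (U : VecFun N) :
    -- U is quasi-definite iff a right-orthogonal sequence of matrix polynomials
    -- `G_m(z) = ∑_{j≤m} β_j^m z^j` exists
    (QuasiDef N hN U h ↔
      ∃ (β : ℕ → ℕ → Mat N) (Θ : ℕ → Mat N),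
        (∀ m, UpperTri (β m m) ∧ IsUnit (β m m).det) ∧
        (∀ m, LowerTri (Θ m) ∧ IsUnit (Θ m).det) ∧
        (∀ m j, j ≤ m →
          (∑ k ∈ Finset.range (m + 1), matUq U (h ^ k) (Pvec N h j) * β m k)
            = if j = m then Θ m else 0)) ∧
    -- moreover: the coefficients solve the block Hankel linear system
    -- `∑_k 𝒰_{j+k} β_k^m = δ_{j,m} Θ_m`, i.e. `D_m (β_0^m; …; β_m^m) = (0; …; 0; Θ_m)`
    (∀ (β : ℕ → ℕ → Mat N) (Θ : ℕ → Mat N),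
      (∀ m, UpperTri (β m m) ∧ IsUnit (β m m).det) →
      (∀ m, LowerTri (Θ m) ∧ IsUnit (Θ m).det) →
      (∀ m j, j ≤ m →
        (∑ k ∈ Finset.range (m + 1), matUq U (h ^ k) (Pvec N h j) * β m k)
          = if j = m then Θ m else 0) →
      ∀ m j, j ≤ m →
        (∑ k ∈ Finset.range (m + 1), Umom N U h (j + k) * β m k)
          = if j = m then Θ m else 0) := by
  obtain ⟨hiff, hsolve⟩ := statement3_general N hN h U
  exact ⟨hiff, fun β Θ _ _ horth => hsolve β Θ horth⟩
end
end

section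
/- Let {G_m}_{m∈ℕ} be a sequence of N×N real matrix polynomials with deg G_m = m, nonsingular leading coefficients, and G_0 = I_{N×N}. Then the following are equivalent: (a) there exists a linear map W : ℝ[x] → M_N(ℝ), with moments S_k := W(x^k), such that ∫x^k dW(x)·G_m(x) := Σ_j S_{k+j}·G_{m,j} (where G_m(x) = Σ_j G_{m,j}x^j) equals Ω_m·δ_{k,m} for all 0 ≤ k ≤ m and all m, with each Ω_m a nonsingular lower triangular matrix; (b) there exist sequences of N×N matrices {A_m}, {B_m}, {C_m}, with each A_m nonsingular lower triangular and each C_m (m ≥ 1) nonsingular, such that z·G_m(z) = G_{m−1}(z)·A_{m−1} + G_m(z)·B_m + G_{m+1}(z)·C_{m+1} for every m ≥ 0, with G_{−1} := 0. Moreover, in that case Ω_m = Ω_0·A_0·A_1⋯A_{m−1}. -/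
open Polynomial Matrix Finset

noncomputable section

/-- `N×N` real matrix polynomials. -/
abbrev MatPoly (N : ℕ) := Polynomial (Mat N)

/-- The right pairing `∫ x^k dW(x) G_m(x) = ∑_j S_{k+j} G_{m,j}`, where `S_i = W(x^i)`
and `G_m` has degree `m`. -/
def rightPair (N : ℕ) (W : Polynomial ℝ →ₗ[ℝ] Mat N) (G : MatPoly N) (m k : ℕ) : Mat N :=
  ∑ j ∈ Finset.range (m + 1), W (X ^ (k + j)) * G.coeff j

/-!
Only the ring structure of the coefficients matters: the invertible lower triangular matrices enter
as a subgroup of the group of units. A moment sequence `S` defines the functional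
`L(∑ xʲ aⱼ) = ∑ Sⱼ aⱼ`, linear for right multiplication by coefficients, and the pairing of `xᵏ`
with `Gₘ` is `L(xᵏ Gₘ)`.

If `G` is right-orthogonal, then `x Gₘ - Gₘ₋₁ Ωₘ₋₁⁻¹ Ωₘ` has degree at most `m + 1` and is
annihilated by `L(xᵏ ·)` for `k < m`. Dividing it by `Gₘ₊₁` and then by `Gₘ` leaves a remainder of
degree less than `m` with the same property, and such a polynomial vanishes.

Conversely, the invertible leading coefficients determine moments with `L(G₀) = 1` and `L(Gₘ) = 0`
for `m > 0`. Multiplying the recurrence by `xᵏ` and applying `L` gives, by induction on `k`, the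
orthogonality relations, and its case `k = m` gives `Ωₘ₊₁ = Ωₘ Aₘ`.
-/

section MomentFunctional

variable {R : Type*} [Semiring R]

/-- The functional `∑ xʲ aⱼ ↦ ∑ Sⱼ aⱼ` with moment sequence `S`. It is linear for the right action
of `R`, which is encoded as linearity over `Rᵐᵒᵖ`. -/
def momentFunctional (S : ℕ → R) : R[X] →ₗ[Rᵐᵒᵖ] R :=
  lsum fun j => LinearMap.mulLeft Rᵐᵒᵖ (S j)

theorem momentFunctional_apply (S : ℕ → R) (P : R[X]) :
    momentFunctional S P = P.sum fun j a => S j * a :=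
  rfl

theorem momentFunctional_eq_sum_range (S : ℕ → R) {n : ℕ} {P : R[X]} (hP : P.natDegree ≤ n) :
    momentFunctional S P = ∑ j ∈ range (n + 1), S j * P.coeff j :=
  sum_over_range' P (fun _ => mul_zero _) _ (Nat.lt_succ_of_le hP)

theorem momentFunctional_mul_C (S : ℕ → R) (P : R[X]) (r : R) :
    momentFunctional S (P * C r) = momentFunctional S P * r := by
  have hsmul : P * C r = MulOpposite.op r • P := by
    ext j
    simp only [coeff_mul_C, coeff_smul, op_smul_eq_mul]
  rw [hsmul, map_smul, op_smul_eq_mul]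

theorem momentFunctional_X_pow_mul (S : ℕ → R) (k : ℕ) (P : R[X]) :
    momentFunctional S (X ^ k * P) = momentFunctional (fun j => S (k + j)) P := by
  induction P using Polynomial.induction_on' with
  | add P Q hP hQ => rw [mul_add, map_add, hP, hQ, map_add]
  | monomial n r =>
    simp only [X_pow_mul_monomial, momentFunctional_apply, mul_zero, sum_monomial_index,
      add_comm n k]

theorem exists_linearMap_X_pow_eq {𝕜 M : Type*} [Semiring 𝕜] [AddCommMonoid M] [Module 𝕜 M]
    (S : ℕ → M) : ∃ W : 𝕜[X] →ₗ[𝕜] M, (fun k => W (X ^ k)) = S := by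
  refine ⟨lsum fun k => LinearMap.toSpanSingleton 𝕜 M (S k), funext fun k => ?_⟩
  simp only [lsum_apply, LinearMap.toSpanSingleton_apply, X_pow_eq_monomial, zero_smul,
    sum_monomial_index, one_smul]

end MomentFunctional

section RightOrthogonal

variable {R : Type*} [Ring R]

/-- The solution `S` of the triangular system `momentFunctional S (G m) = d m`. The junk value
`Ring.inverse u = 0` only occurs when the leading coefficient `u` is not a unit. -/
def interpolatingMoments (G : ℕ → R[X]) (d : ℕ → R) (m : ℕ) : R :=
  (d m - ∑ j : Fin m, interpolatingMoments G d j * (G m).coeff j) * Ring.inverse ((G m).coeff m)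

theorem momentFunctional_interpolatingMoments {G : ℕ → R[X]} {m : ℕ}
    (hdeg : (G m).natDegree ≤ m) (hlead : IsUnit ((G m).coeff m)) (d : ℕ → R) :
    momentFunctional (interpolatingMoments G d) (G m) = d m := by
  rw [momentFunctional_eq_sum_range _ hdeg, sum_range_succ,
    ← Fin.sum_univ_eq_sum_range (fun j => interpolatingMoments G d j * (G m).coeff j),
    interpolatingMoments.eq_1 G d m, Ring.inverse_mul_cancel_right _ _ hlead, add_sub_cancel]

theorem exists_degree_sub_mul_C_lt {P Q : R[X]} {n : ℕ} (hP : P.degree < (n + 1 : ℕ))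
    (hQ : Q.natDegree ≤ n) (hlead : IsUnit (Q.coeff n)) :
    ∃ r : R, (P - Q * C r).degree < n := by
  refine ⟨Ring.inverse (Q.coeff n) * P.coeff n, (degree_lt_iff_coeff_zero _ _).2 fun j hj => ?_⟩
  rw [coeff_sub, coeff_mul_C]
  rcases hj.eq_or_lt with rfl | hj
  · rw [Ring.mul_inverse_cancel_left _ _ hlead, sub_self]
  · rw [(degree_lt_iff_coeff_zero _ _).1 hP j hj, coeff_eq_zero_of_natDegree_lt (hQ.trans_lt hj),
      zero_mul, sub_zero]

/-- Right-orthogonality of `G` with respect to the moment sequence `S`: the pairing of `xᵏ` with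
`G m` is `ω m` for `k = m` and vanishes for `k < m`. -/
def RightOrthogonal (S : ℕ → R) (G : ℕ → R[X]) (ω : ℕ → R) : Prop :=
  ∀ m k, k ≤ m → momentFunctional S (X ^ k * G m) = if k = m then ω m else 0

/-- The three-term recurrence `x Gₘ = Gₘ₋₁ aₘ₋₁ + Gₘ bₘ + Gₘ₊₁ cₘ₊₁` with coefficients acting on
the right, where `G₋₁ = 0`. -/
def ThreeTermRecurrence (G : ℕ → R[X]) (a b c : ℕ → R) : Prop :=
  ∀ m, X * G m = (if m = 0 then 0 else G (m - 1) * C (a (m - 1)))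
    + G m * C (b m) + G (m + 1) * C (c (m + 1))

variable {S ω a b c : ℕ → R} {G : ℕ → R[X]}

theorem natDegree_ite_pred_mul_C_le (hdeg : ∀ m, (G m).natDegree ≤ m) (r : R) (m : ℕ) :
    (if m = 0 then 0 else G (m - 1) * C r).natDegree ≤ m := by
  split_ifs
  · exact natDegree_zero.trans_le m.zero_le
  · exact (natDegree_mul_C_le _ _).trans ((hdeg (m - 1)).trans (m.sub_le 1))

namespace RightOrthogonal

theorem eq_zero (h : RightOrthogonal S G ω) {m k : ℕ} (hk : k < m) :
    momentFunctional S (X ^ k * G m) = 0 := by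
  rw [h m k hk.le, if_neg hk.ne]

theorem eq_norm (h : RightOrthogonal S G ω) (m : ℕ) : momentFunctional S (X ^ m * G m) = ω m := by
  rw [h m m le_rfl, if_pos rfl]

theorem eq_zero_of_degree_lt (h : RightOrthogonal S G ω) (hω : ∀ m, IsUnit (ω m))
    (hdeg : ∀ m, (G m).natDegree ≤ m) (hlead : ∀ m, IsUnit ((G m).coeff m)) {n : ℕ} {P : R[X]}
    (hP : P.degree < n) (hmom : ∀ k < n, momentFunctional S (X ^ k * P) = 0) : P = 0 := by
  induction n generalizing P with
  | zero => simpa using hP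
  | succ n ih =>
    obtain ⟨r, hr⟩ := exists_degree_sub_mul_C_lt hP (hdeg n) (hlead n)
    have hPr : P = G n * C r := by
      refine sub_eq_zero.1 (ih hr fun k hk => ?_)
      rw [mul_sub, map_sub, ← mul_assoc, momentFunctional_mul_C, hmom k (hk.trans n.lt_succ_self),
        h.eq_zero hk, zero_mul, sub_zero]
    have hωr : ω n * r = 0 := by
      rw [← h.eq_norm, ← momentFunctional_mul_C, mul_assoc, ← hPr, hmom n n.lt_succ_self]
    rw [hPr, (hω n).mul_right_eq_zero.1 hωr, C_0, mul_zero]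

theorem exists_eq_add_of_degree_lt (h : RightOrthogonal S G ω) (hω : ∀ m, IsUnit (ω m))
    (hdeg : ∀ m, (G m).natDegree ≤ m) (hlead : ∀ m, IsUnit ((G m).coeff m)) {m : ℕ} {P : R[X]}
    (hP : P.degree < (m + 2 : ℕ)) (hmom : ∀ k < m, momentFunctional S (X ^ k * P) = 0) :
    ∃ r s, P = G m * C r + G (m + 1) * C s := by
  obtain ⟨s, hs⟩ := exists_degree_sub_mul_C_lt hP (hdeg (m + 1)) (hlead (m + 1))
  obtain ⟨r, hr⟩ := exists_degree_sub_mul_C_lt hs (hdeg m) (hlead m)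
  have hzero := h.eq_zero_of_degree_lt hω hdeg hlead hr fun k hk => by
    simp only [mul_sub, map_sub, ← mul_assoc, momentFunctional_mul_C, hmom k hk, h.eq_zero hk,
      h.eq_zero (hk.trans m.lt_succ_self), zero_mul, sub_zero]
  exact ⟨r, s, by rwa [sub_sub, sub_eq_zero, add_comm] at hzero⟩

theorem momentFunctional_X_mul_sub_eq_zero {ω : ℕ → Rˣ} (h : RightOrthogonal S G fun m => ω m)
    {n k : ℕ} (hk : k ≤ n) :
    momentFunctional S
      (X ^ k * (X * G (n + 1) - G n * C (((ω n)⁻¹ * ω (n + 1) : Rˣ) : R))) = 0 := by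
  rw [mul_sub, map_sub, ← mul_assoc, ← mul_assoc, ← pow_succ, momentFunctional_mul_C, sub_eq_zero]
  rcases hk.eq_or_lt with rfl | hk
  · rw [h.eq_norm, h.eq_norm, Units.val_mul, Units.mul_inv_cancel_left]
  · rw [h.eq_zero (Nat.succ_lt_succ hk), h.eq_zero hk, zero_mul]

theorem exists_threeTermRecurrence {ω : ℕ → Rˣ} (h : RightOrthogonal S G fun m => ω m)
    (hdeg : ∀ m, (G m).natDegree ≤ m) (hlead : ∀ m, IsUnit ((G m).coeff m)) :
    ∃ b c, ThreeTermRecurrence G (fun m => ((ω m)⁻¹ * ω (m + 1) : Rˣ)) b c := by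
  have expand (m : ℕ) : ∃ r s, X * G m =
      (if m = 0 then 0 else G (m - 1) * C (((ω (m - 1))⁻¹ * ω (m - 1 + 1) : Rˣ) : R))
        + G m * C r + G (m + 1) * C s := by
    simp only [add_assoc, ← sub_eq_iff_eq_add' (a := X * G m)]
    refine h.exists_eq_add_of_degree_lt (fun m => (ω m).isUnit) hdeg hlead ?_ fun k hk => ?_
    · have hX : (X * G m).natDegree ≤ m + 1 :=
        add_comm 1 m ▸ natDegree_mul_le_of_le natDegree_X_le (hdeg m)
      have hprev (r : R) := (natDegree_ite_pred_mul_C_le hdeg r m).trans m.le_succ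
      refine lt_of_le_of_lt (degree_le_of_natDegree_le ?_) (Nat.cast_lt.2 (m + 1).lt_succ_self)
      exact (natDegree_sub_le _ _).trans (max_le hX (hprev _))
    · obtain ⟨n, rfl⟩ := Nat.exists_eq_add_one_of_ne_zero (Nat.ne_zero_of_lt hk)
      exact h.momentFunctional_X_mul_sub_eq_zero (Nat.lt_succ_iff.1 hk)
  choose b c hbc using expand
  exact ⟨b, fun m => c (m - 1), hbc⟩

end RightOrthogonal

namespace ThreeTermRecurrence

theorem isUnit_succ (h : ThreeTermRecurrence G a b c) (hdeg : ∀ m, (G m).natDegree ≤ m)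
    (hlead : ∀ m, IsUnit ((G m).coeff m)) (m : ℕ) : IsUnit (c (m + 1)) := by
  have hcoeff : (G m).coeff m = (G (m + 1)).coeff (m + 1) * c (m + 1) := by
    rw [← coeff_X_mul, h m, coeff_add, coeff_add, coeff_mul_C, coeff_mul_C,
      coeff_eq_zero_of_natDegree_lt (Nat.lt_succ_of_le (natDegree_ite_pred_mul_C_le hdeg _ m)),
      coeff_eq_zero_of_natDegree_lt (Nat.lt_succ_of_le (hdeg m)), zero_mul, zero_add, zero_add]
  exact (hlead (m + 1)).unit.isUnit_units_mul _ |>.1 (hcoeff ▸ hlead m)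

theorem momentFunctional_X_pow_succ_mul (h : ThreeTermRecurrence G a b c) (S : ℕ → R) (k m : ℕ) :
    momentFunctional S (X ^ (k + 1) * G (m + 1)) = momentFunctional S (X ^ k * G m) * a m
      + momentFunctional S (X ^ k * G (m + 1)) * b (m + 1)
      + momentFunctional S (X ^ k * G (m + 2)) * c (m + 2) := by
  rw [pow_succ, mul_assoc, h (m + 1), if_neg m.succ_ne_zero, Nat.add_sub_cancel]
  simp only [mul_add, map_add, ← mul_assoc, momentFunctional_mul_C]

theorem norm_succ (h : ThreeTermRecurrence G a b c) (hS : RightOrthogonal S G ω) (m : ℕ) :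
    ω (m + 1) = ω m * a m := by
  rw [← hS.eq_norm (m + 1), h.momentFunctional_X_pow_succ_mul, hS.eq_norm,
    hS.eq_zero m.lt_succ_self, hS.eq_zero (by lia : m < m + 2), zero_mul, zero_mul,
    add_zero, add_zero]

theorem rightOrthogonal (h : ThreeTermRecurrence G a b c)
    (hS : ∀ m, momentFunctional S (G (m + 1)) = 0) :
    RightOrthogonal S G fun m => momentFunctional S (G 0) * ((List.range m).map a).prod := by
  intro m k hk
  induction k generalizing m with
  | zero =>
    rw [pow_zero, one_mul]
    cases m with
    | zero => simp
    | succ m => rw [hS, if_neg m.succ_ne_zero.symm]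
  | succ k ih =>
    obtain ⟨n, rfl⟩ := Nat.exists_eq_add_one_of_ne_zero (Nat.ne_zero_of_lt hk)
    have hkn : k ≤ n := Nat.succ_le_succ_iff.1 hk
    rw [h.momentFunctional_X_pow_succ_mul, ih n hkn, ih (n + 1) (by lia), ih (n + 2) (by lia),
      if_neg (by lia : k ≠ n + 1), if_neg (by lia : k ≠ n + 2), zero_mul, zero_mul, add_zero,
      add_zero, ite_mul, zero_mul, mul_assoc, ← List.prod_range_succ]
    simp only [add_left_inj]

theorem exists_rightOrthogonal (h : ThreeTermRecurrence G a b c)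
    (hdeg : ∀ m, (G m).natDegree ≤ m) (hlead : ∀ m, IsUnit ((G m).coeff m)) :
    ∃ S, RightOrthogonal S G fun m => ((List.range m).map a).prod := by
  let d : ℕ → R := fun m => if m = 0 then 1 else 0
  have hmom (m : ℕ) : momentFunctional (interpolatingMoments G d) (G m) = d m :=
    momentFunctional_interpolatingMoments (hdeg m) (hlead m) d
  have horth := h.rightOrthogonal fun m => (hmom (m + 1)).trans (if_neg m.succ_ne_zero)
  exact ⟨_, by simpa only [hmom, d, if_pos, one_mul] using horth⟩

end ThreeTermRecurrence

end RightOrthogonal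

section Triangular

/-- The invertible matrices that are block triangular with respect to `b`, as a subgroup of the
units; invertible lower triangular matrices are the case `b = OrderDual.toDual`. -/
def blockTriangularUnits {n α R : Type*} [Fintype n] [DecidableEq n] [LinearOrder α] [CommRing R]
    (b : n → α) : Subgroup (Matrix n n R)ˣ where
  carrier := {U | (U : Matrix n n R).BlockTriangular b}
  one_mem' := blockTriangular_one
  mul_mem' := BlockTriangular.mul
  inv_mem' {U} hU := by
    have := U.invertible
    rw [Set.mem_ofPred_eq, coe_units_inv]
    exact blockTriangular_inv_of_blockTriangular hU

theorem mem_ofUnits_blockTriangularUnits {n α R : Type*} [Fintype n] [DecidableEq n]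
    [LinearOrder α] [CommRing R] {b : n → α} {A : Matrix n n R} :
    A ∈ (blockTriangularUnits b).ofUnits ↔ A.BlockTriangular b ∧ IsUnit A.det := by
  rw [← isUnit_iff_isUnit_det]
  constructor
  · rintro ⟨U, hU, rfl⟩
    exact ⟨hU, U.isUnit⟩
  · rintro ⟨hU, U, rfl⟩
    exact ⟨U, hU, rfl⟩

theorem lowerTri_iff_blockTriangular {N : ℕ} {R : Type*} [Zero R]
    {A : Matrix (Fin N) (Fin N) R} : LowerTri A ↔ A.BlockTriangular OrderDual.toDual :=
  Iff.rfl

end Triangular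

theorem rightPair_eq_momentFunctional {N : ℕ} (W : ℝ[X] →ₗ[ℝ] Mat N) {P : MatPoly N} {m : ℕ}
    (hP : P.natDegree ≤ m) (k : ℕ) :
    rightPair N W P m k = momentFunctional (fun i => W (X ^ i)) (X ^ k * P) := by
  rw [momentFunctional_X_pow_mul, momentFunctional_eq_sum_range _ hP, rightPair]

theorem statement11_general {𝕜 R : Type*} [Semiring 𝕜] [Ring R] [Module 𝕜 R] (T : Subgroup Rˣ)
    (G : ℕ → R[X]) (hdeg : ∀ m, (G m).natDegree ≤ m) (hlead : ∀ m, IsUnit ((G m).coeff m)) :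
    ((∃ (W : 𝕜[X] →ₗ[𝕜] R) (ω : ℕ → R),
        (∀ m, ω m ∈ T.ofUnits) ∧ RightOrthogonal (fun k => W (X ^ k)) G ω)
      ↔ ∃ a b c : ℕ → R, (∀ m, a m ∈ T.ofUnits) ∧ (∀ m, 1 ≤ m → IsUnit (c m)) ∧
          ThreeTermRecurrence G a b c) ∧
    ∀ (W : 𝕜[X] →ₗ[𝕜] R) (ω a b c : ℕ → R), RightOrthogonal (fun k => W (X ^ k)) G ω →
      ThreeTermRecurrence G a b c → ∀ m, ω (m + 1) = ω m * a m := by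
  refine ⟨⟨?_, ?_⟩, fun W ω a b c hW hrec => hrec.norm_succ hW⟩
  · rintro ⟨W, ω, hω, hW⟩
    choose u huT huω using hω
    obtain rfl : (fun m => (u m : R)) = ω := funext huω
    obtain ⟨b, c, hrec⟩ := hW.exists_threeTermRecurrence hdeg hlead
    refine ⟨_, b, c, fun m => ⟨_, T.mul_mem (T.inv_mem (huT m)) (huT (m + 1)), rfl⟩, ?_, hrec⟩
    exact fun m hm => Nat.sub_add_cancel hm ▸ hrec.isUnit_succ hdeg hlead (m - 1)
  · rintro ⟨a, b, c, ha, -, hrec⟩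
    obtain ⟨S, hS⟩ := hrec.exists_rightOrthogonal hdeg hlead
    obtain ⟨W, rfl⟩ := exists_linearMap_X_pow_eq (𝕜 := 𝕜) S
    exact ⟨W, _, fun m => T.ofUnits.list_prod_mem (List.forall_mem_map.2 fun j _ => ha j), hS⟩

theorem statement11
    (N : ℕ) (hN : 0 < N)
    (G : ℕ → MatPoly N) (hGdeg : ∀ m, (G m).natDegree = m)
    (hGlead : ∀ m, IsUnit ((G m).coeff m).det) (hG0 : G 0 = 1) :
    -- (a) ⟺ (b)
    ((∃ (W : Polynomial ℝ →ₗ[ℝ] Mat N) (Ω : ℕ → Mat N),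
        (∀ m, LowerTri (Ω m) ∧ IsUnit (Ω m).det) ∧
        (∀ m k, k ≤ m → rightPair N W (G m) m k = if k = m then Ω m else 0))
    ↔ (∃ A B C : ℕ → Mat N,
        (∀ m, LowerTri (A m) ∧ IsUnit (A m).det) ∧
        (∀ m, 1 ≤ m → IsUnit (C m).det) ∧
        (∀ m : ℕ, X * G m =
          (if m = 0 then 0 else G (m - 1) * Polynomial.C (A (m - 1)))
          + G m * Polynomial.C (B m) + G (m + 1) * Polynomial.C (C (m + 1))))) ∧
    -- moreover, Ω_m = Ω_0 A_0 A_1 ⋯ A_{m-1}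
    (∀ (W : Polynomial ℝ →ₗ[ℝ] Mat N) (Ω A B C : ℕ → Mat N),
      (∀ m, LowerTri (Ω m) ∧ IsUnit (Ω m).det) →
      (∀ m k, k ≤ m → rightPair N W (G m) m k = if k = m then Ω m else 0) →
      (∀ m, LowerTri (A m) ∧ IsUnit (A m).det) →
      (∀ m, 1 ≤ m → IsUnit (C m).det) →
      (∀ m : ℕ, X * G m =
        (if m = 0 then 0 else G (m - 1) * Polynomial.C (A (m - 1)))
        + G m * Polynomial.C (B m) + G (m + 1) * Polynomial.C (C (m + 1))) →
      ∀ m, 1 ≤ m → Ω m = Ω (m - 1) * A (m - 1)) := by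
  have key := statement11_general (𝕜 := ℝ) (blockTriangularUnits OrderDual.toDual) G
    (fun m => (hGdeg m).le) fun m => (isUnit_iff_isUnit_det _).2 (hGlead m)
  simp only [mem_ofUnits_blockTriangularUnits, ← lowerTri_iff_blockTriangular,
    isUnit_iff_isUnit_det, RightOrthogonal, ← rightPair_eq_momentFunctional _ (hGdeg _).le] at key
  exact ⟨key.1, fun W Ω A B C _ hW _ _ hrec m hm =>
    Nat.sub_add_cancel hm ▸ key.2 W Ω A B C hW hrec (m - 1)⟩
end
end
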